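/- arXiv:2202.00281 — 3 statements merged into one kernel-verified Lean document; each statement's English description precedes it below -/
import Mathlib

section
/- Let b : ℝ → ℝ be a smooth, nonnegative, integrable function and let ρ be a W^{2,2} solution of the Kazdan–Warner equation ρ'' = 1 − e^{−ρ} − b. Then for every s ∈ ℝ one has 0 ≤ ρ(s) ≤ max{2 ln 2, 4‖b‖_{L¹}²}. -/
open MeasureTheory Real

/-- `ρ` is a `W^{2,2}` solution of the Kazdan–Warner equation `ρ'' = 1 - e^{-ρ} - b`. -/
def IsW22SolutionKW (b ρ : ℝ → ℝ) : Prop :=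
  ContDiff ℝ 2 ρ ∧
  MeasureTheory.Integrable (fun s => (ρ s) ^ 2) ∧
  MeasureTheory.Integrable (fun s => (deriv ρ s) ^ 2) ∧
  MeasureTheory.Integrable (fun s => (deriv (deriv ρ) s) ^ 2) ∧
  ∀ s : ℝ, deriv (deriv ρ) s = 1 - Real.exp (-ρ s) - b s

open Filter Topology Set

/-- A differentiable function which is square-integrable together with its derivative
vanishes at `±∞`. -/
theorem tendsto_zero_of_integrable_sq_of_integrable_sq_deriv {f : ℝ → ℝ}
    (hf : ContDiff ℝ 1 f) (hf2 : Integrable (fun s => f s ^ 2))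
    (hf'2 : Integrable (fun s => deriv f s ^ 2)) :
    Tendsto f atTop (𝓝 0) ∧ Tendsto f atBot (𝓝 0) := by
  have hd (x : ℝ) : HasDerivAt (fun s => f s ^ 2) (2 * f x * deriv f x) x := by
    simpa using (hf.differentiable one_ne_zero x).hasDerivAt.fun_pow 2
  have hc : Continuous fun s => 2 * f s * deriv f s :=
    (continuous_const.mul hf.continuous).mul (hf.continuous_deriv le_rfl)
  have hint : Integrable fun s => 2 * f s * deriv f s := by
    refine (hf2.add hf'2).mono' hc.aestronglyMeasurable (.of_forall fun s => ?_)
    simp only [Pi.add_apply, Real.norm_eq_abs, abs_le]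
    constructor <;> nlinarith [sq_nonneg (f s + deriv f s), sq_nonneg (f s - deriv f s)]
  have hroot {l : Filter ℝ} (h : Tendsto (fun s => f s ^ 2) l (𝓝 0)) : Tendsto f l (𝓝 0) := by
    have h' := h.sqrt
    simp only [Real.sqrt_sq_eq_abs, Real.sqrt_zero] at h'
    exact (tendsto_zero_iff_abs_tendsto_zero f).2 h'
  exact ⟨hroot <| tendsto_zero_of_hasDerivAt_of_integrableOn_Ioi (a := 0) (fun x _ => hd x)
      hint.integrableOn hf2.integrableOn,
    hroot <| tendsto_zero_of_hasDerivAt_of_integrableOn_Iic (a := 0) (fun x _ => hd x)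
      hint.integrableOn hf2.integrableOn⟩

/-- The second derivative is nonnegative at a local minimum. -/
theorem IsLocalMin.deriv_deriv_nonneg {f : ℝ → ℝ} {x : ℝ} (h : IsLocalMin f x)
    (hc : ContinuousAt f x) : 0 ≤ deriv (deriv f) x := by
  by_contra! hneg
  have hmax := isLocalMax_of_deriv_deriv_neg hneg h.deriv_eq_zero hc
  have hconst : f =ᶠ[𝓝 x] fun _ => f x := by
    filter_upwards [h, hmax] with y h₁ h₂ using le_antisymm h₂ h₁
  have := hconst.deriv.deriv_eq
  simp at this
  linarith

namespace IsW22SolutionKW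

variable {b ρ : ℝ → ℝ}

theorem contDiff_deriv (hρ : IsW22SolutionKW b ρ) : ContDiff ℝ 1 (deriv ρ) :=
  ((contDiff_succ_iff_deriv (n := 1)).1 (by simpa [one_add_one_eq_two] using hρ.1)).2.2

theorem tendsto_zero (hρ : IsW22SolutionKW b ρ) :
    Tendsto ρ atTop (𝓝 0) ∧ Tendsto ρ atBot (𝓝 0) :=
  tendsto_zero_of_integrable_sq_of_integrable_sq_deriv (hρ.1.of_le (by norm_num)) hρ.2.1 hρ.2.2.1

theorem tendsto_deriv_zero (hρ : IsW22SolutionKW b ρ) :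
    Tendsto (deriv ρ) atTop (𝓝 0) ∧ Tendsto (deriv ρ) atBot (𝓝 0) :=
  tendsto_zero_of_integrable_sq_of_integrable_sq_deriv hρ.contDiff_deriv hρ.2.2.1 hρ.2.2.2.1

/-- Maximum principle: solutions are nonnegative. -/
theorem nonneg (hρ : IsW22SolutionKW b ρ) (hb : ∀ s, 0 ≤ b s) (s : ℝ) : 0 ≤ ρ s := by
  by_contra! hs
  have hc : Continuous ρ := hρ.1.continuous
  obtain ⟨x, hx⟩ := hc.exists_forall_le' s (by
    rw [cocompact_eq_atBot_atTop]
    exact eventually_sup.2 ⟨(hρ.tendsto_zero.2.eventually_const_lt hs).mono fun _ => le_of_lt,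
      (hρ.tendsto_zero.1.eventually_const_lt hs).mono fun _ => le_of_lt⟩)
  have hmin : IsLocalMin ρ x := .of_forall hx
  have h₁ := hmin.deriv_deriv_nonneg hc.continuousAt
  rw [hρ.2.2.2.2 x] at h₁
  have h₂ : 1 < Real.exp (-ρ x) := Real.one_lt_exp_iff.2 (by linarith [hx s])
  linarith [hb x]

theorem integral_one_sub_exp_le_deriv_sub_add (hρ : IsW22SolutionKW b ρ) (hb : ∀ s, 0 ≤ b s)
    (hbi : Integrable b) {s c d t : ℝ} (hsc : s ≤ c) (hcd : c ≤ d) (hdt : d ≤ t) :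
    ∫ u in c..d, (1 - Real.exp (-ρ u)) ≤ deriv ρ t - deriv ρ s + ∫ u, b u := by
  have hg : Continuous fun u => 1 - Real.exp (-ρ u) := by
    have := hρ.1.continuous
    fun_prop
  have hst : s ≤ t := hsc.trans (hcd.trans hdt)
  have h₁ : ∫ u in c..d, (1 - Real.exp (-ρ u)) ≤ ∫ u in s..t, (1 - Real.exp (-ρ u)) := by
    refine intervalIntegral.integral_mono_interval hsc hcd hdt (.of_forall fun u => ?_)
      (hg.intervalIntegrable _ _)
    have : Real.exp (-ρ u) ≤ 1 := Real.exp_le_one_iff.2 (by linarith [hρ.nonneg hb u])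
    simpa using this
  have h₂ : ∫ u in s..t, b u ≤ ∫ u, b u := by
    rw [intervalIntegral.integral_of_le hst]
    exact setIntegral_le_integral hbi (.of_forall hb)
  have h₃ : ∫ u in s..t, (1 - Real.exp (-ρ u) - b u) = deriv ρ t - deriv ρ s := by
    refine intervalIntegral.integral_eq_sub_of_hasDerivAt (fun u _ => ?_)
      ((hg.intervalIntegrable _ _).sub hbi.intervalIntegrable)
    rw [← hρ.2.2.2.2 u]
    exact (hρ.contDiff_deriv.differentiable one_ne_zero u).hasDerivAt
  rw [intervalIntegral.integral_sub (hg.intervalIntegrable _ _) hbi.intervalIntegrable] at h₃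
  linarith

theorem integral_one_sub_exp_le (hρ : IsW22SolutionKW b ρ) (hb : ∀ s, 0 ≤ b s)
    (hbi : Integrable b) {c d : ℝ} (hcd : c ≤ d) :
    ∫ u in c..d, (1 - Real.exp (-ρ u)) ≤ ∫ u, b u := by
  have hlim : Tendsto (fun t => deriv ρ t - deriv ρ (-t) + ∫ u, b u) atTop (𝓝 (∫ u, b u)) := by
    simpa using (hρ.tendsto_deriv_zero.1.sub
      (hρ.tendsto_deriv_zero.2.comp tendsto_neg_atTop_atBot)).add_const (∫ u, b u)
  refine ge_of_tendsto hlim ?_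
  filter_upwards [eventually_ge_atTop d, eventually_ge_atTop (-c)] with t hd hc
  exact hρ.integral_one_sub_exp_le_deriv_sub_add hb hbi (by linarith) hcd hd

theorem abs_deriv_le (hρ : IsW22SolutionKW b ρ) (hb : ∀ s, 0 ≤ b s)
    (hbi : Integrable b) (x : ℝ) : |deriv ρ x| ≤ ∫ u, b u := by
  have key {s t : ℝ} (hst : s ≤ t) : 0 ≤ deriv ρ t - deriv ρ s + ∫ u, b u := by
    simpa using hρ.integral_one_sub_exp_le_deriv_sub_add hb hbi le_rfl le_rfl hst
  refine abs_le.2 ⟨le_of_tendsto (hρ.tendsto_deriv_zero.2.sub_const (∫ u, b u)) ?_ |>.trans' ?_,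
    ge_of_tendsto (hρ.tendsto_deriv_zero.1.add_const (∫ u, b u)) ?_ |>.trans ?_⟩
  · filter_upwards [eventually_le_atBot x] with s hs
    linarith [key hs]
  · simp
  · filter_upwards [eventually_ge_atTop x] with t ht
    linarith [key ht]
  · simp

/-- A solution taking a value above `2 log 2` at `s` stays above `log 2` on any interval around `s`
of radius `r` with `‖b‖₁ r ≤ ρ s / 2`, and such an interval has `r ≤ ‖b‖₁`. -/
theorem radius_le (hρ : IsW22SolutionKW b ρ) (hb : ∀ s, 0 ≤ b s) (hbi : Integrable b) {s r : ℝ}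
    (hs : 2 * Real.log 2 ≤ ρ s) (hr : 0 ≤ r) (hbr : (∫ u, b u) * r ≤ ρ s / 2) :
    r ≤ ∫ u, b u := by
  have hg : Continuous fun u => 1 - Real.exp (-ρ u) := by
    have := hρ.1.continuous
    fun_prop
  have hB : 0 ≤ ∫ u, b u := integral_nonneg hb
  have hlow (u : ℝ) (hu : u ∈ Icc (s - r) (s + r)) : (1 / 2 : ℝ) ≤ 1 - Real.exp (-ρ u) := by
    have h₁ : ‖ρ u - ρ s‖ ≤ (∫ u, b u) * ‖u - s‖ :=
      Convex.norm_image_sub_le_of_norm_deriv_le (s := univ)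
        (fun x _ => hρ.1.differentiable two_ne_zero x)
        (fun x _ => hρ.abs_deriv_le hb hbi x) convex_univ trivial trivial
    have h₂ : ‖u - s‖ ≤ r := abs_le.2 ⟨by linarith [hu.1], by linarith [hu.2]⟩
    have h₃ := h₁.trans (mul_le_mul_of_nonneg_left h₂ hB)
    have h₄ : Real.log 2 ≤ ρ u := by linarith [(abs_le.1 h₃).1]
    have h₅ : Real.exp (-ρ u) ≤ Real.exp (-Real.log 2) := Real.exp_le_exp.2 (by linarith)
    rw [Real.exp_neg (Real.log 2), Real.exp_log two_pos] at h₅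
    linarith
  have hsr : s - r ≤ s + r := by linarith
  have h := intervalIntegral.integral_mono_on (μ := volume) hsr intervalIntegrable_const
    (hg.intervalIntegrable _ _) hlow
  rw [intervalIntegral.integral_const, smul_eq_mul] at h
  linarith [hρ.integral_one_sub_exp_le hb hbi hsr]

end IsW22SolutionKW

/-- Any `W^{2,2}` solution of the Kazdan–Warner equation satisfies the pointwise bound
`0 ≤ ρ(s) ≤ max {2 ln 2, 4 ‖b‖_{L¹}²}`. -/
theorem kazdan_warner_pointwise_bound
    (b : ℝ → ℝ) (hb_smooth : ContDiff ℝ (⊤ : ℕ∞) b) (hb_nonneg : ∀ s, 0 ≤ b s)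
    (hb_L1 : Integrable b)
    (ρ : ℝ → ℝ) (hρ : IsW22SolutionKW b ρ) :
    ∀ s : ℝ, 0 ≤ ρ s ∧ ρ s ≤ max (2 * Real.log 2) (4 * (∫ s : ℝ, |b s|) ^ 2) := by
  intro s
  refine ⟨hρ.nonneg hb_nonneg s, ?_⟩
  by_contra! hlt
  simp only [abs_of_nonneg (hb_nonneg _)] at hlt
  obtain ⟨h₁, h₂⟩ := max_lt_iff.1 hlt
  have hB : 0 ≤ ∫ u, b u := integral_nonneg hb_nonneg
  have hpos : 0 < ρ s := by linarith [Real.log_pos one_lt_two]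
  set B := ∫ u, b u
  have hε : 0 < ρ s / (4 * (B + 1)) := by positivity
  have hBε : B * (ρ s / (4 * (B + 1))) ≤ ρ s / 4 := by
    rw [mul_div_assoc', div_le_div_iff₀ (by positivity) (by norm_num)]
    nlinarith
  have := hρ.radius_le hb_nonneg hb_L1 (r := B + ρ s / (4 * (B + 1))) h₁.le (by positivity)
    (by rw [mul_add]; nlinarith)
  linarith
end

section
/- There exists a continuous function c : [0,∞) × [0,∞) → [0,∞) such that for every smooth, nonnegative, integrable and square-integrable function b : ℝ → ℝ and every W^{2,2} solution ρ of the Kazdan–Warner equation ρ'' = 1 − e^{−ρ} − b, one has ‖ρ‖_{L²}² + ‖ρ'‖_{L²}² + ‖ρ''‖_{L²}² ≤ c(‖b‖_{L¹}, ‖b‖_{L²}). -/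
open MeasureTheory Real

open Filter Topology Set

/-- The product of two continuous square-integrable functions is integrable. -/
lemma integrable_mul_of_integrable_sq {f g : ℝ → ℝ} (hf : Continuous f) (hg : Continuous g)
    (hf2 : Integrable fun s => f s ^ 2) (hg2 : Integrable fun s => g s ^ 2) :
    Integrable fun s => f s * g s :=
  ((memLp_two_iff_integrable_sq hf.aestronglyMeasurable).2 hf2).integrable_mul
    ((memLp_two_iff_integrable_sq hg.aestronglyMeasurable).2 hg2)

lemma hasDerivAt_sq_of_contDiff {ρ : ℝ → ℝ} (h1 : ContDiff ℝ 1 ρ) (x : ℝ) :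
    HasDerivAt (fun s => ρ s ^ 2) (2 * (ρ x * deriv ρ x)) x := by
  have h := ((h1.differentiable one_ne_zero) x).hasDerivAt.fun_pow 2
  refine h.congr_deriv ?_
  push_cast
  ring

/-- A `C¹` function which is square-integrable together with its derivative vanishes at
infinity. -/
lemma tendsto_zero_cocompact_of_integrable_sq {ρ : ℝ → ℝ} (h1 : ContDiff ℝ 1 ρ)
    (h2 : Integrable fun s => ρ s ^ 2) (h3 : Integrable fun s => deriv ρ s ^ 2) :
    Tendsto ρ (cocompact ℝ) (𝓝 0) := by
  have hint : Integrable fun s => 2 * (ρ s * deriv ρ s) :=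
    (integrable_mul_of_integrable_sq h1.continuous (h1.continuous_deriv le_rfl) h2 h3).const_mul 2
  have hsq : Tendsto (fun s => ρ s ^ 2) (cocompact ℝ) (𝓝 0) := by
    rw [cocompact_eq_atBot_atTop, tendsto_sup]
    exact ⟨tendsto_zero_of_hasDerivAt_of_integrableOn_Iic (a := 0)
        (fun x _ => hasDerivAt_sq_of_contDiff h1 x) hint.integrableOn h2.integrableOn,
      tendsto_zero_of_hasDerivAt_of_integrableOn_Ioi (a := 0)
        (fun x _ => hasDerivAt_sq_of_contDiff h1 x) hint.integrableOn h2.integrableOn⟩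
  have habs := (Real.continuous_sqrt.tendsto 0).comp hsq
  simp only [Function.comp_def, Real.sqrt_sq_eq_abs, Real.sqrt_zero] at habs
  exact (tendsto_zero_iff_abs_tendsto_zero ρ).2 habs

/-- A one-dimensional Sobolev inequality. -/
lemma sq_le_two_mul_integral_abs_mul_deriv {ρ : ℝ → ℝ} (h1 : ContDiff ℝ 1 ρ)
    (h2 : Integrable fun s => ρ s ^ 2) (h3 : Integrable fun s => deriv ρ s ^ 2) (x : ℝ) :
    ρ x ^ 2 ≤ ∫ s, 2 * |ρ s * deriv ρ s| := by
  have hprod := integrable_mul_of_integrable_sq h1.continuous (h1.continuous_deriv le_rfl) h2 h3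
  have hint : Integrable fun s => 2 * (ρ s * deriv ρ s) := hprod.const_mul 2
  have habs : Integrable fun s => 2 * |ρ s * deriv ρ s| := hprod.abs.const_mul 2
  have hbot : Tendsto (fun s => ρ s ^ 2) atBot (𝓝 0) :=
    tendsto_zero_of_hasDerivAt_of_integrableOn_Iic (a := 0)
      (fun y _ => hasDerivAt_sq_of_contDiff h1 y) hint.integrableOn h2.integrableOn
  have hftc := integral_Iic_of_hasDerivAt_of_tendsto' (a := x)
    (fun y _ => hasDerivAt_sq_of_contDiff h1 y) hint.integrableOn hbot
  calc ρ x ^ 2 = ∫ s in Iic x, 2 * (ρ s * deriv ρ s) := by rw [hftc, sub_zero]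
    _ ≤ ∫ s in Iic x, 2 * |ρ s * deriv ρ s| :=
        setIntegral_mono hint.integrableOn habs.integrableOn
          fun s => by linarith [le_abs_self (ρ s * deriv ρ s)]
    _ ≤ ∫ s, 2 * |ρ s * deriv ρ s| :=
        setIntegral_le_integral habs (Eventually.of_forall fun s => by positivity)

lemma deriv_deriv_nonneg_of_forall_le {f : ℝ → ℝ} (hf : Continuous f) {x : ℝ}
    (hx : ∀ y, f x ≤ f y) : 0 ≤ deriv (deriv f) x := by
  by_contra! hneg
  have hmin : IsLocalMin f x := Eventually.of_forall hx
  have hmax := isLocalMax_of_deriv_deriv_neg hneg hmin.deriv_eq_zero hf.continuousAt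
  have hconst : f =ᶠ[𝓝 x] fun _ => f x := by
    filter_upwards [hmax] with y hy using le_antisymm hy (hx y)
  rw [hconst.deriv.deriv_eq] at hneg
  simp at hneg

/-- Maximum principle: solutions vanishing at infinity with `b ≥ 0` are nonnegative. -/
lemma kazdanWarner_nonneg {b ρ : ℝ → ℝ} (hρ : Continuous ρ) (hb : ∀ s, 0 ≤ b s)
    (hlim : Tendsto ρ (cocompact ℝ) (𝓝 0))
    (heq : ∀ s, deriv (deriv ρ) s = 1 - Real.exp (-ρ s) - b s) (x : ℝ) : 0 ≤ ρ x := by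
  by_contra! hx
  obtain ⟨z, hz⟩ := hρ.exists_forall_le' x
    ((hlim.eventually (lt_mem_nhds hx)).mono fun _ h => h.le)
  have h := deriv_deriv_nonneg_of_forall_le hρ hz
  have hexp : 1 < Real.exp (-ρ z) := Real.one_lt_exp_iff.2 (by linarith [hz x])
  linarith [heq z, hb z]

lemma exists_forall_le_of_tendsto_zero {ρ : ℝ → ℝ} (hρ : Continuous ρ) (h0 : ∀ x, 0 ≤ ρ x)
    (hlim : Tendsto ρ (cocompact ℝ) (𝓝 0)) : ∃ z, ∀ y, ρ y ≤ ρ z := by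
  by_cases h : ∃ x, 0 < ρ x
  · obtain ⟨x, hx⟩ := h
    exact hρ.exists_forall_ge' x ((hlim.eventually (gt_mem_nhds hx)).mono fun _ h => h.le)
  · push Not at h
    exact ⟨0, fun y => (h y).trans (h0 0)⟩

lemma sq_le_one_add_mul_mul_one_sub_exp {t M : ℝ} (ht : 0 ≤ t) (htM : t ≤ M) :
    t ^ 2 ≤ (1 + M) * (t * (1 - Real.exp (-t))) := by
  have h1 : Real.exp (-t) * (1 + t) ≤ 1 := by
    calc Real.exp (-t) * (1 + t) ≤ Real.exp (-t) * Real.exp t := by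
          gcongr
          linarith [Real.add_one_le_exp t]
      _ = 1 := by rw [← Real.exp_add]; simp
  have h2 : Real.exp (-t) ≤ 1 := Real.exp_le_one_iff.2 (by linarith)
  have h3 : t ≤ (1 + M) * (1 - Real.exp (-t)) := by
    nlinarith [mul_nonneg (sub_nonneg.2 htM) (sub_nonneg.2 h2)]
  nlinarith [mul_le_mul_of_nonneg_left h3 ht]

lemma le_one_add_sq_of_sq_le_sqrt_mul {M B : ℝ}
    (h : M ^ 2 ≤ √(1 + M) * (M * B)) : M ≤ 1 + B ^ 2 := by
  by_contra! hlt
  have hpos : 0 < M := by nlinarith [sq_nonneg B]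
  have h1 : M ≤ √(1 + M) * B := by
    refine le_of_mul_le_mul_left ?_ hpos
    linarith
  have h2 : M ^ 2 ≤ (1 + M) * B ^ 2 := by
    calc M ^ 2 ≤ (√(1 + M) * B) ^ 2 := by gcongr
      _ = (1 + M) * B ^ 2 := by rw [mul_pow, Real.sq_sqrt (by linarith)]
  nlinarith [mul_lt_mul_of_pos_left hlt hpos]

/-- There is a continuous nonnegative function `c` on `[0,∞) × [0,∞)` such that every
`W^{2,2}` solution `ρ` of the Kazdan–Warner equation for a smooth, nonnegative,
integrable and square-integrable `b` satisfies
`‖ρ‖_{L²}² + ‖ρ'‖_{L²}² + ‖ρ''‖_{L²}² ≤ c(‖b‖_{L¹}, ‖b‖_{L²})`. -/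
theorem kazdan_warner_uniform_W22_bound :
    ∃ c : ℝ → ℝ → ℝ,
      ContinuousOn (fun p : ℝ × ℝ => c p.1 p.2) (Set.Ici 0 ×ˢ Set.Ici 0) ∧
      (∀ x y : ℝ, 0 ≤ x → 0 ≤ y → 0 ≤ c x y) ∧
      ∀ b ρ : ℝ → ℝ, ContDiff ℝ (⊤ : ℕ∞) b → (∀ s, 0 ≤ b s) → Integrable b →
        (Integrable fun s => (b s) ^ 2) → IsW22SolutionKW b ρ →
        (∫ s : ℝ, (ρ s) ^ 2) + (∫ s : ℝ, (deriv ρ s) ^ 2) +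
            (∫ s : ℝ, (deriv (deriv ρ) s) ^ 2) ≤
          c (∫ s : ℝ, |b s|) (Real.sqrt (∫ s : ℝ, (b s) ^ 2)) := by
  refine ⟨fun x y => 3 * ((2 + x ^ 2) * ((1 + x ^ 2) * x)) + (1 + x ^ 2) * x + 2 * y ^ 2,
    by fun_prop, fun x y hx hy => by positivity, ?_⟩
  rintro b ρ hbs hb hb1 hb2 ⟨hρ, hρ0, hρ1, hρ2, heq⟩
  have hC1 : ContDiff ℝ 1 ρ := hρ.of_le one_le_two
  have hC1' : ContDiff ℝ 1 (deriv ρ) := hρ.deriv'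
  have hc := hC1.continuous
  have hc' := hC1'.continuous
  have hc'' : Continuous (deriv (deriv ρ)) := hC1'.continuous_deriv le_rfl
  have hbc := hbs.continuous
  have hlim := tendsto_zero_cocompact_of_integrable_sq hC1 hρ0 hρ1
  have hpos := kazdanWarner_nonneg hc hb hlim heq
  obtain ⟨z, hz⟩ := exists_forall_le_of_tendsto_zero hc hpos hlim
  set M := ρ z
  have hM : 0 ≤ M := hpos z
  have hibρ : Integrable fun s => b s * ρ s := integrable_mul_of_integrable_sq hbc hc hb2 hρ0
  have hiρρ'' : Integrable fun s => ρ s * deriv (deriv ρ) s :=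
    integrable_mul_of_integrable_sq hc hc'' hρ0 hρ2
  have hih : Integrable fun s => ρ s * (1 - Real.exp (-ρ s)) := by
    refine (hiρρ''.add hibρ).congr (Eventually.of_forall fun s => ?_)
    simp only [Pi.add_apply, heq s]
    ring
  have hiρρ' := integrable_mul_of_integrable_sq hc hc' hρ0 hρ1
  have hparts : ∫ s, ρ s * deriv (deriv ρ) s = -∫ s, deriv ρ s * deriv ρ s :=
    integral_mul_deriv_eq_deriv_mul_of_integrable
      (fun x _ => ((hC1.differentiable one_ne_zero) x).hasDerivAt)
      (fun x _ => ((hC1'.differentiable one_ne_zero) x).hasDerivAt) hiρρ''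
      (integrable_mul_of_integrable_sq hc' hc' hρ1 hρ1) hiρρ'
  have henergy : (∫ s, deriv ρ s ^ 2) + ∫ s, ρ s * (1 - Real.exp (-ρ s)) = ∫ s, b s * ρ s := by
    have hsplit : ∫ s, ρ s * deriv (deriv ρ) s =
        (∫ s, ρ s * (1 - Real.exp (-ρ s))) - ∫ s, b s * ρ s := by
      rw [← integral_sub hih hibρ]
      refine integral_congr_ae (Eventually.of_forall fun s => ?_)
      simp only [heq s]
      ring
    simp only [pow_two]
    linarith
  set B := ∫ s, |b s| with hBdef
  have hB : 0 ≤ B := integral_nonneg fun s => abs_nonneg _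
  have hbρ : ∫ s, b s * ρ s ≤ M * B := by
    rw [hBdef, ← integral_const_mul]
    refine integral_mono hibρ (hb1.abs.const_mul M) fun s => ?_
    simp only [abs_of_nonneg (hb s)]
    nlinarith [mul_le_mul_of_nonneg_left (hz s) (hb s)]
  have hh0 : 0 ≤ ∫ s, ρ s * (1 - Real.exp (-ρ s)) := integral_nonneg fun s =>
    mul_nonneg (hpos s) (sub_nonneg.2 (Real.exp_le_one_iff.2 (by linarith [hpos s])))
  have hρ'0 : 0 ≤ ∫ s, deriv ρ s ^ 2 := integral_nonneg fun s => sq_nonneg _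
  have hsup : M ^ 2 ≤ √(1 + M) * (M * B) := by
    calc M ^ 2 ≤ ∫ s, 2 * |ρ s * deriv ρ s| :=
          sq_le_two_mul_integral_abs_mul_deriv hC1 hρ0 hρ1 z
      _ ≤ ∫ s, √(1 + M) * (deriv ρ s ^ 2 + ρ s * (1 - Real.exp (-ρ s))) := by
          refine integral_mono (hiρρ'.abs.const_mul 2) ((hρ1.add hih).const_mul _) fun s => ?_
          have hL : 0 < √(1 + M) := Real.sqrt_pos.2 (by linarith)
          have hL2 : √(1 + M) ^ 2 = 1 + M := Real.sq_sqrt (by linarith)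
          have hkey := sq_le_one_add_mul_mul_one_sub_exp (hpos s) (hz s)
          rw [← hL2] at hkey
          simp only [abs_mul, abs_of_nonneg (hpos s)]
          refine le_of_mul_le_mul_left ?_ hL
          nlinarith [sq_nonneg (√(1 + M) * |deriv ρ s| - ρ s), sq_abs (deriv ρ s)]
      _ = √(1 + M) * ∫ s, b s * ρ s := by
          rw [integral_const_mul, integral_add hρ1 hih, henergy]
      _ ≤ √(1 + M) * (M * B) := by gcongr
  have hMB : M ≤ 1 + B ^ 2 := le_one_add_sq_of_sq_le_sqrt_mul hsup
  have hMB' : M * B ≤ (1 + B ^ 2) * B := by gcongr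
  have hL2 : ∫ s, ρ s ^ 2 ≤ (2 + B ^ 2) * ((1 + B ^ 2) * B) := by
    calc ∫ s, ρ s ^ 2 ≤ ∫ s, (1 + M) * (ρ s * (1 - Real.exp (-ρ s))) :=
          integral_mono hρ0 (hih.const_mul _)
            fun s => sq_le_one_add_mul_mul_one_sub_exp (hpos s) (hz s)
      _ = (1 + M) * ∫ s, ρ s * (1 - Real.exp (-ρ s)) := integral_const_mul _ _
      _ ≤ (2 + B ^ 2) * ((1 + B ^ 2) * B) := by
          refine mul_le_mul ?_ ?_ hh0 ?_
          · linarith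
          · linarith
          · positivity
  have hρ'' : ∫ s, deriv (deriv ρ) s ^ 2 ≤ 2 * (∫ s, ρ s ^ 2) + 2 * ∫ s, b s ^ 2 := by
    rw [← integral_const_mul, ← integral_const_mul,
      ← integral_add (hρ0.const_mul 2) (hb2.const_mul 2)]
    refine integral_mono hρ2 ((hρ0.const_mul 2).add (hb2.const_mul 2)) fun s => ?_
    have h1 : 1 - Real.exp (-ρ s) ≤ ρ s := by linarith [Real.add_one_le_exp (-ρ s)]
    have h2 : 0 ≤ 1 - Real.exp (-ρ s) :=
      sub_nonneg.2 (Real.exp_le_one_iff.2 (by linarith [hpos s]))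
    simp only [heq s]
    nlinarith [sq_nonneg (1 - Real.exp (-ρ s) + b s), pow_le_pow_left₀ h2 h1 2]
  beta_reduce
  rw [Real.sq_sqrt (integral_nonneg fun s => sq_nonneg (b s))]
  linarith
end

section
/- Let g : ℝ → ℝ be a continuous function with g(s) > 0 for all s ∈ ℝ, and let χ : ℝ → ℝ be twice continuously differentiable with χ(s) → 0 as s → ±∞ and χ''(s) = (e^{χ(s)} − 1)·g(s) for all s ∈ ℝ. Then χ is identically zero. -/
open Filter

/-- A continuous function vanishing at `±∞` whose second derivative is positive wherever the
function is positive is nowhere positive. -/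
lemma nonpos_of_deriv_deriv_pos_of_pos {f : ℝ → ℝ} (hf : Continuous f)
    (htop : Tendsto f atTop (nhds 0)) (hbot : Tendsto f atBot (nhds 0))
    (hpos : ∀ x, 0 < f x → 0 < deriv (deriv f) x) (x : ℝ) : f x ≤ 0 := by
  by_contra! hx
  have hlt : ∀ᶠ y in cocompact ℝ, f y ≤ f x := by
    rw [cocompact_eq_atBot_atTop]
    exact ((hbot.sup htop).eventually_lt_const hx).mono fun _ h => h.le
  obtain ⟨x₀, hx₀⟩ := hf.exists_forall_ge' x hlt
  have hmax : IsLocalMax f x₀ := Eventually.of_forall hx₀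
  have hsecond : 0 < deriv (deriv f) x₀ := hpos x₀ (hx.trans_le (hx₀ x))
  have hmin : IsLocalMin f x₀ :=
    isLocalMin_of_deriv_deriv_pos hsecond hmax.deriv_eq_zero hf.continuousAt
  have hconst : f =ᶠ[nhds x₀] fun _ => f x₀ := by
    filter_upwards [hmax, hmin] with y h₁ h₂ using le_antisymm h₁ h₂
  have hzero : deriv (deriv f) x₀ = 0 := by
    rw [hconst.deriv.deriv_eq]
    simp
  exact hsecond.ne' hzero

/-- Maximum-principle type statement: if `g` is continuous and everywhere positive and
`χ` is twice continuously differentiable with `χ → 0` at `±∞` and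
`χ'' = (e^χ - 1) g`, then `χ` vanishes identically. -/
theorem maximum_principle_exp_ode
    (g : ℝ → ℝ) (hg_cont : Continuous g) (hg_pos : ∀ s : ℝ, 0 < g s)
    (χ : ℝ → ℝ) (hχ : ContDiff ℝ 2 χ)
    (hχ_top : Tendsto χ atTop (nhds 0)) (hχ_bot : Tendsto χ atBot (nhds 0))
    (hode : ∀ s : ℝ, deriv (deriv χ) s = (Real.exp (χ s) - 1) * g s) :
    ∀ s : ℝ, χ s = 0 := by
  intro s
  apply le_antisymm
  · refine nonpos_of_deriv_deriv_pos_of_pos hχ.continuous hχ_top hχ_bot (fun x hx => ?_) s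
    rw [hode]
    exact mul_pos (sub_pos.2 (Real.one_lt_exp_iff.2 hx)) (hg_pos x)
  · refine neg_nonpos.1 (nonpos_of_deriv_deriv_pos_of_pos (f := fun x => -χ x)
      hχ.continuous.neg (by simpa using hχ_top.neg) (by simpa using hχ_bot.neg)
      (fun x hx => ?_) s)
    have hneg : deriv (deriv fun x => -χ x) x = -deriv (deriv χ) x := by
      simp
    rw [hneg, hode, neg_pos]
    exact mul_neg_of_neg_of_pos (sub_neg.2 (Real.exp_lt_one_iff.2 (neg_pos.1 hx))) (hg_pos x)
end
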